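/- Let h(t) be a smooth one-parameter family of Riemannian metrics and define, for a spatial function f, the field-dependent vector field ζ_f[h]ⁱ(x,t) = ∂_j f(x) ∫_{t₀}^t hʲⁱ(x,t′) dt′ and the variation δ_f h = f ḣ + L_{ζ_f[h]} h. For a time-independent spatial vector field χ with δ_χ h = L_χ h, the commutator satisfies [δ_f, δ_χ] h = −δ_{L_χ f} h = −(χ(f) ḣ + L_{ζ_{χ(f)}[h]} h). -/

import Mathlib

open scoped BigOperators

/-- Partial derivative in the `k`-th coordinate direction. -/
noncomputable def pd {dd : ℕ} (k : Fin dd) (F : (Fin dd → ℝ) → ℝ)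
    (x : Fin dd → ℝ) : ℝ :=
  fderiv ℝ F x (Pi.single k 1)

/-- Coordinate expression of the Lie derivative of a (0,2)-tensor (metric) `m`
along the vector field `X`:
`(L_X m)_{ij} = X^k ∂_k m_{ij} + m_{kj} ∂_i X^k + m_{ik} ∂_j X^k`. -/
noncomputable def matLie {dd : ℕ} (X : (Fin dd → ℝ) → Fin dd → ℝ)
    (m : (Fin dd → ℝ) → Matrix (Fin dd) (Fin dd) ℝ) (x : Fin dd → ℝ) :
    Matrix (Fin dd) (Fin dd) ℝ :=
  Matrix.of fun i j =>
    (∑ k, X x k * pd k (fun y => m y i j) x)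
      + ∑ k, (m x k j * pd i (fun y => X y k) x + m x i k * pd j (fun y => X y k) x)

/-- The field-dependent vector field
`ζ_f[h]ⁱ(x,t) = ∂_j f(x) ∫_{t₀}^t hʲⁱ(x,t′) dt′` (with `hʲⁱ` the inverse metric). -/
noncomputable def zeta {dd : ℕ} (f : (Fin dd → ℝ) → ℝ)
    (h : ℝ → (Fin dd → ℝ) → Matrix (Fin dd) (Fin dd) ℝ) (t₀ t : ℝ)
    (x : Fin dd → ℝ) : Fin dd → ℝ :=
  fun i => ∑ j, pd j f x * ∫ s in t₀..t, (h s x)⁻¹ j i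

/-- The local-boost variation `δ_f h = f ḣ + L_{ζ_f[h]} h`. -/
noncomputable def deltaF {dd : ℕ} (f : (Fin dd → ℝ) → ℝ)
    (h : ℝ → (Fin dd → ℝ) → Matrix (Fin dd) (Fin dd) ℝ) (t₀ t : ℝ)
    (x : Fin dd → ℝ) : Matrix (Fin dd) (Fin dd) ℝ :=
  Matrix.of fun i j =>
    f x * deriv (fun s => h s x i j) t + matLie (zeta f h t₀ t) (h t) x i j

/-- The spatial-diffeomorphism variation `δ_χ h = L_χ h`. -/
noncomputable def deltaChi {dd : ℕ} (χ : (Fin dd → ℝ) → Fin dd → ℝ)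
    (h : ℝ → (Fin dd → ℝ) → Matrix (Fin dd) (Fin dd) ℝ) (t : ℝ)
    (x : Fin dd → ℝ) : Matrix (Fin dd) (Fin dd) ℝ :=
  matLie χ (h t) x

/-!
Every tensor operation in the two variations is natural under diffeomorphisms, except that `δ_f`
also depends on `f`, which `δ_χ` leaves fixed. Concretely, `ζ_f[h]` is the contraction of `df` with
`∫ h⁻¹`. Since matrix inversion turns `δ_χ h = L_χ h` into `δ_χ (h⁻¹) = L_χ (h⁻¹)`, and `L_χ`
commutes with `d`, with contractions and with the time integral, the field dependence of `ζ_f`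
contributes `δ_χ ζ_f = L_χ ζ_f - ζ_{χ(f)} = [χ, ζ_f] - ζ_{χ(f)}`. With
`L_{[χ, ζ_f]} = L_χ L_{ζ_f} - L_{ζ_f} L_χ` and the Leibniz rule for `f ḣ`, varying `δ_f h` along
`δ_χ` gives `L_χ (δ_f h) - δ_{χ(f)} h`, while varying `δ_χ h = L_χ h` along `δ_f` gives
`L_χ (δ_f h)`.
-/

open Filter Function MeasureTheory Set Topology VectorField
open scoped ContDiff Matrix Matrix.Norms.L2Operator

section ContinuousIntegrand

variable {X F : Type*} [TopologicalSpace X] [NormedAddCommGroup F]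
  {G : ℝ → X → F} {a b : ℝ} {v : X}

lemma eventually_forall_mem_uIcc {p : ℝ × X → Prop}
    (hp : ∀ t ∈ uIcc a b, ∀ᶠ q in 𝓝 (t, v), p q) :
    ∀ᶠ w in 𝓝 v, ∀ t ∈ uIcc a b, p (t, w) :=
  isCompact_uIcc.eventually_forall_of_forall_eventually fun t ht =>
    (continuous_swap.tendsto (v, t)).eventually (hp t ht)

lemma continuousOn_left_of_continuousAt_uncurry
    (hG : ∀ t ∈ uIcc a b, ContinuousAt (uncurry G) (t, v)) :
    ContinuousOn (fun t => G t v) (uIcc a b) := fun t ht =>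
  ((hG t ht).comp (f := fun t => (t, v)) (by fun_prop)).continuousWithinAt

lemma aestronglyMeasurable_left_of_continuousAt_uncurry
    (hG : ∀ t ∈ uIcc a b, ContinuousAt (uncurry G) (t, v)) :
    AEStronglyMeasurable (fun t => G t v) (volume.restrict (uIoc a b)) :=
  ((continuousOn_left_of_continuousAt_uncurry hG).mono uIoc_subset_uIcc).aestronglyMeasurable
    measurableSet_uIoc

lemma exists_eventually_forall_mem_uIcc_norm_le
    (hG : ∀ t ∈ uIcc a b, ContinuousAt (uncurry G) (t, v)) :
    ∃ C, ∀ᶠ w in 𝓝 v, ∀ t ∈ uIcc a b, ‖G t w‖ ≤ C := by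
  obtain ⟨C, hC⟩ := isCompact_uIcc.exists_bound_of_continuousOn
    (continuousOn_left_of_continuousAt_uncurry hG)
  refine ⟨C + 1, eventually_forall_mem_uIcc (p := fun q => ‖uncurry G q‖ ≤ C + 1) fun t ht => ?_⟩
  have hlt : ‖uncurry G (t, v)‖ < C + 1 := (hC t ht).trans_lt (lt_add_one C)
  exact ((hG t ht).norm.eventually_lt_const hlt).mono fun q => le_of_lt

lemma continuousAt_intervalIntegral [FirstCountableTopology X] [NormedSpace ℝ F]
    (hG : ∀ t ∈ uIcc a b, ∀ᶠ q in 𝓝 (t, v), ContinuousAt (uncurry G) q) :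
    ContinuousAt (fun w => ∫ t in a..b, G t w) v := by
  obtain ⟨C, hC⟩ :=
    exists_eventually_forall_mem_uIcc_norm_le fun t ht => (hG t ht).self_of_nhds
  refine intervalIntegral.continuousAt_of_dominated_interval (bound := fun _ => C) ?_ ?_
    intervalIntegrable_const ?_
  · exact (eventually_forall_mem_uIcc hG).mono fun w =>
      aestronglyMeasurable_left_of_continuousAt_uncurry
  · exact hC.mono fun w hw => .of_forall fun t ht => hw t (uIoc_subset_uIcc ht)
  · exact .of_forall fun t ht => (hG t (uIoc_subset_uIcc ht)).self_of_nhds.comp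
      (f := fun w => (t, w)) (by fun_prop)

end ContinuousIntegrand

section SmoothIntegrand

variable {V F : Type*} [NormedAddCommGroup V] [NormedSpace ℝ V] [NormedAddCommGroup F]
  [NormedSpace ℝ F] {G : ℝ → V → F} {a b : ℝ} {v : V}

lemma contDiffAt_uncurry_fderiv {m n : ℕ∞ω} {t : ℝ} (hG : ContDiffAt ℝ n (uncurry G) (t, v))
    (hmn : m + 1 ≤ n) : ContDiffAt ℝ m (uncurry fun t w => fderiv ℝ (G t) w) (t, v) :=
  ContDiffAt.fderiv (f := fun q : ℝ × V => G q.1) (g := Prod.snd) (x₀ := (t, v))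
    (hG.comp ((t, v), v) (contDiffAt_fst.fst.prodMk contDiffAt_snd)) contDiffAt_snd hmn

lemma hasFDerivAt_intervalIntegral
    (hG : ∀ t ∈ uIcc a b, ContDiffAt ℝ 1 (uncurry G) (t, v)) :
    HasFDerivAt (fun w => ∫ t in a..b, G t w) (∫ t in a..b, fderiv ℝ (G t) v) v := by
  have hG_near : ∀ᶠ w in 𝓝 v, ∀ t ∈ uIcc a b, ContDiffAt ℝ 1 (uncurry G) (t, w) :=
    eventually_forall_mem_uIcc fun t ht => (hG t ht).eventually (by simp)
  have hG' : ∀ t ∈ uIcc a b, ContinuousAt (uncurry fun t w => fderiv ℝ (G t) w) (t, v) :=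
    fun t ht => (contDiffAt_uncurry_fderiv (m := 0) (hG t ht) (by simp)).continuousAt
  obtain ⟨C, hC⟩ := exists_eventually_forall_mem_uIcc_norm_le hG'
  refine intervalIntegral.hasFDerivAt_integral_of_dominated_of_fderiv_le
    (F := fun w t => G t w) (F' := fun w t => fderiv ℝ (G t) w) (bound := fun _ => C)
    (hG_near.and hC) ?_ ?_ ?_ ?_ intervalIntegrable_const ?_
  · exact hG_near.mono fun w hw =>
      aestronglyMeasurable_left_of_continuousAt_uncurry fun t ht => (hw t ht).continuousAt
  · exact (continuousOn_left_of_continuousAt_uncurry fun t ht =>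
      (hG t ht).continuousAt).intervalIntegrable
  · exact aestronglyMeasurable_left_of_continuousAt_uncurry hG'
  · exact .of_forall fun t ht w hw => hw.2 t (uIoc_subset_uIcc ht)
  · refine .of_forall fun t ht w hw => DifferentiableAt.hasFDerivAt ?_
    exact (hw.1 t (uIoc_subset_uIcc ht)).differentiableAt_one.comp (f := fun w => (t, w)) w
      (by fun_prop)

universe u

lemma contDiffAt_intervalIntegral {V F : Type u} [NormedAddCommGroup V] [NormedSpace ℝ V]
    [NormedAddCommGroup F] [NormedSpace ℝ F] {G : ℝ → V → F} {v : V} {n : ℕ}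
    (hG : ∀ t ∈ uIcc a b, ContDiffAt ℝ n (uncurry G) (t, v)) :
    ContDiffAt ℝ n (fun w => ∫ t in a..b, G t w) v := by
  induction n generalizing F with
  | zero =>
    have hG_near : ∀ᶠ w in 𝓝 v, ∀ t ∈ uIcc a b, ContDiffAt ℝ 0 (uncurry G) (t, w) :=
      eventually_forall_mem_uIcc fun t ht => (hG t ht).eventually (by simp)
    refine contDiffAt_zero.2 ⟨_, hG_near, fun w hw => ContinuousAt.continuousWithinAt ?_⟩
    exact continuousAt_intervalIntegral fun t ht =>
      ((hw t ht).eventually (by simp)).mono fun q hq => hq.continuousAt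
  | succ n ih =>
    have hG_near : ∀ᶠ w in 𝓝 v, ∀ t ∈ uIcc a b, ContDiffAt ℝ 1 (uncurry G) (t, w) :=
      eventually_forall_mem_uIcc fun t ht => ((hG t ht).of_le (by simp)).eventually (by simp)
    exact contDiffAt_succ_iff_hasFDerivAt.2 ⟨fun w => ∫ t in a..b, fderiv ℝ (G t) w,
      ⟨_, hG_near, fun w hw => hasFDerivAt_intervalIntegral hw⟩,
      ih fun t ht => contDiffAt_uncurry_fderiv (hG t ht) (by simp)⟩

end SmoothIntegrand

section FirstVariation

variable {V W : Type*} [NormedAddCommGroup V] [NormedSpace ℝ V]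
  [NormedAddCommGroup W] [NormedSpace ℝ W]
  {F : ℝ → V → W} {F' : V → W} {s₀ : ℝ} {x : V}

/-- `F'` is the first variation at `s = s₀` of the one-parameter family of fields `s ↦ F s`, to
first order at the point `x`: both the values and the spatial derivatives of the family at `x` are
differentiable in the parameter, with derivatives given by `F'`. First-order operators such as the
Lie derivative can then be varied term by term. -/
structure HasVariationAt (F : ℝ → V → W) (F' : V → W) (s₀ : ℝ) (x : V) : Prop where
  hasDerivAt : HasDerivAt (fun s => F s x) (F' x) s₀
  hasDerivAt_fderiv : HasDerivAt (fun s => fderiv ℝ (F s) x) (fderiv ℝ F' x) s₀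

namespace HasVariationAt

lemma const (F : V → W) (s₀ : ℝ) (x : V) : HasVariationAt (fun _ => F) (fun _ => 0) s₀ x :=
  ⟨hasDerivAt_const s₀ (F x), (hasDerivAt_const s₀ (fderiv ℝ F x)).congr_deriv (by simp)⟩

lemma add_smul {A B : V → W} (hA : DifferentiableAt ℝ A x) (hB : DifferentiableAt ℝ B x) :
    HasVariationAt (fun s y => A y + s • B y) B s₀ x where
  hasDerivAt := by simpa using ((hasDerivAt_id s₀).smul_const (B x)).const_add (A x)
  hasDerivAt_fderiv := by
    have hfderiv (s : ℝ) : fderiv ℝ (fun y => A y + s • B y) x = fderiv ℝ A x + s • fderiv ℝ B x :=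
      (hA.hasFDerivAt.add (hB.hasFDerivAt.const_smul s)).fderiv
    simp only [hfderiv]
    simpa using ((hasDerivAt_id s₀).smul_const (fderiv ℝ B x)).const_add (fderiv ℝ A x)

lemma congr_family {F₁ : ℝ → V → W} (hF : HasVariationAt F F' s₀ x)
    (h : ∀ᶠ s in 𝓝 s₀, F₁ s =ᶠ[𝓝 x] F s) : HasVariationAt F₁ F' s₀ x :=
  ⟨hF.hasDerivAt.congr_of_eventuallyEq (h.mono fun _ hs => hs.eq_of_nhds),
    hF.hasDerivAt_fderiv.congr_of_eventuallyEq (h.mono fun _ hs => hs.fderiv_eq)⟩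

lemma congr_variation {F'' : V → W} (hF : HasVariationAt F F' s₀ x) (h : F' =ᶠ[𝓝 x] F'') :
    HasVariationAt F F'' s₀ x :=
  ⟨h.eq_of_nhds ▸ hF.hasDerivAt, h.fderiv_eq (𝕜 := ℝ) ▸ hF.hasDerivAt_fderiv⟩

end HasVariationAt

lemma hasDerivAt_of_differentiableAt_uncurry (hF : DifferentiableAt ℝ (uncurry F) (s₀, x)) :
    HasDerivAt (fun s => F s x) (fderiv ℝ (uncurry F) (s₀, x) (1, 0)) s₀ :=
  have hpair : HasDerivAt (fun s : ℝ => (s, x)) (1, 0) s₀ :=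
    (hasDerivAt_id s₀).prodMk (hasDerivAt_const s₀ x)
  HasFDerivAt.comp_hasDerivAt (l := uncurry F) s₀ hF.hasFDerivAt hpair

lemma differentiableAt_left_of_uncurry (hF : DifferentiableAt ℝ (uncurry F) (s₀, x)) :
    DifferentiableAt ℝ (fun s => F s x) s₀ :=
  (hasDerivAt_of_differentiableAt_uncurry hF).differentiableAt

lemma differentiableAt_right_of_uncurry (hF : DifferentiableAt ℝ (uncurry F) (s₀, x)) :
    DifferentiableAt ℝ (F s₀) x :=
  hF.comp (f := fun y => (s₀, y)) x (by fun_prop)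

lemma fderiv_of_differentiableAt_uncurry (hF : DifferentiableAt ℝ (uncurry F) (s₀, x)) :
    fderiv ℝ (F s₀) x = fderiv ℝ (uncurry F) (s₀, x) ∘L ContinuousLinearMap.inr ℝ ℝ V :=
  HasFDerivAt.fderiv (f := F s₀) (hF.hasFDerivAt.comp x (hasFDerivAt_prodMk_right s₀ x))

lemma hasFDerivAt_deriv_left (hF : ContDiffAt ℝ 2 (uncurry F) (s₀, x)) :
    HasFDerivAt (fun y => deriv (fun s => F s y) s₀)
      ((fderiv ℝ (fderiv ℝ (uncurry F)) (s₀, x) ∘L ContinuousLinearMap.inr ℝ ℝ V).flip (1, 0))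
      x := by
  have hDF : DifferentiableAt ℝ (fderiv ℝ (uncurry F)) (s₀, x) :=
    (hF.fderiv_right (m := 1) (by norm_num)).differentiableAt_one
  have hparam : (fun y => deriv (fun s => F s y) s₀) =ᶠ[𝓝 x]
      fun y => fderiv ℝ (uncurry F) (s₀, y) (1, 0) :=
    ((Continuous.prodMk_right s₀).tendsto x |>.eventually (hF.eventually (by simp))).mono
      fun y hy => (hasDerivAt_of_differentiableAt_uncurry (hy.differentiableAt (by simp))).deriv
  refine HasFDerivAt.congr_of_eventuallyEq ?_ hparam
  have hDF_space := hDF.hasFDerivAt.comp x (hasFDerivAt_prodMk_right s₀ x)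
  exact (hDF_space.clm_apply (hasFDerivAt_const ((1, 0) : ℝ × V) x)).congr_fderiv (by simp)

lemma hasVariationAt_of_contDiffAt (hF : ContDiffAt ℝ 2 (uncurry F) (s₀, x)) :
    HasVariationAt F (fun y => deriv (fun s => F s y) s₀) s₀ x := by
  have hspace : ∀ᶠ s in 𝓝 s₀, fderiv ℝ (F s) x =
      fderiv ℝ (uncurry F) (s, x) ∘L ContinuousLinearMap.inr ℝ ℝ V :=
    ((Continuous.prodMk_left x).tendsto s₀ |>.eventually (hF.eventually (by simp))).mono
      fun s hs => fderiv_of_differentiableAt_uncurry (hs.differentiableAt (by simp))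
  have hDF : DifferentiableAt ℝ (fderiv ℝ (uncurry F)) (s₀, x) :=
    (hF.fderiv_right (m := 1) (by norm_num)).differentiableAt_one
  have hDF_param : HasDerivAt (fun s => fderiv ℝ (uncurry F) (s, x))
      (fderiv ℝ (fderiv ℝ (uncurry F)) (s₀, x) (1, 0)) s₀ :=
    hasDerivAt_of_differentiableAt_uncurry (F := curry (fderiv ℝ (uncurry F))) hDF
  have hspace_param :=
    hDF_param.clm_comp (hasDerivAt_const s₀ (ContinuousLinearMap.inr ℝ ℝ V))
  refine ⟨(differentiableAt_left_of_uncurry (hF.differentiableAt (by simp))).hasDerivAt,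
    (hspace_param.congr_of_eventuallyEq hspace).congr_deriv ?_⟩
  have hsymm : IsSymmSndFDerivAt ℝ (uncurry F) (s₀, x) := hF.isSymmSndFDerivAt (by simp)
  ext u
  simpa [(hasFDerivAt_deriv_left hF).fderiv] using hsymm.eq (1, 0) (0, u)

end FirstVariation

lemma contDiffAt_bilinear {V W₁ W₂ W : Type*} [NormedAddCommGroup V] [NormedSpace ℝ V]
    [NormedAddCommGroup W₁] [NormedSpace ℝ W₁] [NormedAddCommGroup W₂] [NormedSpace ℝ W₂]
    [NormedAddCommGroup W] [NormedSpace ℝ W] {B : W₁ →L[ℝ] W₂ →L[ℝ] W} {S : V → W₁} {T : V → W₂}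
    {n : ℕ∞ω} {v : V} (hS : ContDiffAt ℝ n S v) (hT : ContDiffAt ℝ n T v) :
    ContDiffAt ℝ n (fun w => B (S w) (T w)) v :=
  (B.contDiff.contDiffAt.comp v hS).clm_apply hT

section LieDerivative

variable {E W : Type*} [NormedAddCommGroup E] [NormedSpace ℝ E] [NormedAddCommGroup W]
  [NormedSpace ℝ W]

/-- The Lie derivative along `X` of a tensor field `T` on a normed space, for the tensor type
described by the infinitesimal action `ρ` of the endomorphisms of the tangent space on the fibre:
`ρ A = 0` for functions, `ρ A v = -A v` for vector fields, `ρ A w = w ∘ A` for covector fields. -/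
noncomputable def lieDeriv (ρ : (E →L[ℝ] E) →L[ℝ] W →L[ℝ] W) (X : E → E) (T : E → W) (x : E) : W :=
  fderiv ℝ T x (X x) + ρ (fderiv ℝ X x) (T x)

variable {ρ : (E →L[ℝ] E) →L[ℝ] W →L[ℝ] W} {X Y : E → E} {T : E → W} {x : E}

lemma lieDeriv_congr {X₁ X₂ : E → E} {T₁ T₂ : E → W} (hX : X₁ =ᶠ[𝓝 x] X₂)
    (hT : T₁ =ᶠ[𝓝 x] T₂) : lieDeriv ρ X₁ T₁ x = lieDeriv ρ X₂ T₂ x := by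
  simp only [lieDeriv, hX.eq_of_nhds, hT.eq_of_nhds, hX.fderiv_eq, hT.fderiv_eq]

lemma lieDeriv_sub_left (hX : DifferentiableAt ℝ X x) (hY : DifferentiableAt ℝ Y x) :
    lieDeriv ρ (fun y => X y - Y y) T x = lieDeriv ρ X T x - lieDeriv ρ Y T x := by
  simp only [lieDeriv, fderiv_fun_sub hX hY, map_sub, sub_apply]
  abel

lemma lieDeriv_neg_id (X V : E → E) (x : E) :
    lieDeriv (-ContinuousLinearMap.id ℝ (E →L[ℝ] E)) X V x = lieBracket ℝ X V x := by
  simp [lieDeriv, lieBracket, sub_eq_add_neg]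

lemma lieDeriv_zero_left (T : E → W) (x : E) : lieDeriv ρ (fun _ => 0) T x = 0 := by
  simp [lieDeriv]

lemma lieDeriv_add_right {S : E → W} (hS : DifferentiableAt ℝ S x) (hT : DifferentiableAt ℝ T x) :
    lieDeriv ρ X (fun y => S y + T y) x = lieDeriv ρ X S x + lieDeriv ρ X T x := by
  simp only [lieDeriv, fderiv_fun_add hS hT, map_add, add_apply]
  abel

lemma lieDeriv_smul {g : E → ℝ} (hg : DifferentiableAt ℝ g x) (hT : DifferentiableAt ℝ T x) :
    lieDeriv ρ X (fun y => g y • T y) x = fderiv ℝ g x (X x) • T x + g x • lieDeriv ρ X T x := by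
  simp only [lieDeriv, fderiv_fun_smul hg hT, add_apply, smul_apply,
    ContinuousLinearMap.smulRight_apply, map_smul, smul_add]
  abel

lemma contDiffAt_uncurry_lieDeriv {T : ℝ → E → W} {m n : ℕ∞ω} {s : ℝ}
    (hX : ContDiffAt ℝ n X x) (hT : ContDiffAt ℝ n (uncurry T) (s, x)) (hmn : m + 1 ≤ n) :
    ContDiffAt ℝ m (uncurry fun s => lieDeriv ρ X (T s)) (s, x) := by
  have hmn' : m ≤ n := le_self_add.trans hmn
  have hX' : ContDiffAt ℝ m (fderiv ℝ X) x := hX.fderiv_right hmn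
  refine ((contDiffAt_uncurry_fderiv hT hmn).clm_apply ?_).add
    (ContDiffAt.clm_apply ?_ (hT.of_le hmn'))
  · exact (hX.of_le hmn').comp (s, x) contDiffAt_snd
  · exact ρ.contDiff.contDiffAt.comp (s, x) (hX'.comp (s, x) contDiffAt_snd)

lemma contDiffAt_lieDeriv {m n : ℕ∞ω} (hX : ContDiffAt ℝ n X x) (hT : ContDiffAt ℝ n T x)
    (hmn : m + 1 ≤ n) : ContDiffAt ℝ m (lieDeriv ρ X T) x :=
  have hmn' : m ≤ n := le_self_add.trans hmn
  ((hT.fderiv_right hmn).clm_apply (hX.of_le hmn')).add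
    ((ρ.contDiff.contDiffAt.comp x (hX.fderiv_right hmn)).clm_apply (hT.of_le hmn'))

lemma lieDeriv_bilinear {W₁ W₂ : Type*} [NormedAddCommGroup W₁] [NormedSpace ℝ W₁]
    [NormedAddCommGroup W₂] [NormedSpace ℝ W₂] {ρ₁ : (E →L[ℝ] E) →L[ℝ] W₁ →L[ℝ] W₁}
    {ρ₂ : (E →L[ℝ] E) →L[ℝ] W₂ →L[ℝ] W₂} {B : W₁ →L[ℝ] W₂ →L[ℝ] W} {S : E → W₁} {T : E → W₂}
    (hB : ∀ A u v, ρ A (B u v) = B (ρ₁ A u) v + B u (ρ₂ A v))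
    (hS : DifferentiableAt ℝ S x) (hT : DifferentiableAt ℝ T x) :
    lieDeriv ρ X (fun y => B (S y) (T y)) x =
      B (lieDeriv ρ₁ X S x) (T x) + B (S x) (lieDeriv ρ₂ X T x) := by
  rw [lieDeriv, (B.hasFDerivAt_of_bilinear hS.hasFDerivAt hT.hasFDerivAt).fderiv, hB]
  simp only [lieDeriv, add_apply, map_add, ContinuousLinearMap.precompL_apply,
    ContinuousLinearMap.precompR_apply, ContinuousLinearMap.compL_apply,
    ContinuousLinearMap.comp_apply]
  abel

lemma lieDeriv_intervalIntegral [CompleteSpace W] {T : ℝ → E → W} {a b : ℝ}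
    (hT : ∀ t ∈ uIcc a b, ContDiffAt ℝ 1 (uncurry T) (t, x)) :
    lieDeriv ρ X (fun y => ∫ t in a..b, T t y) x = ∫ t in a..b, lieDeriv ρ X (T t) x := by
  have hT_cont : ContinuousOn (fun t => T t x) (uIcc a b) :=
    continuousOn_left_of_continuousAt_uncurry fun t ht => (hT t ht).continuousAt
  have hT'_cont : ContinuousOn (fun t => fderiv ℝ (T t) x) (uIcc a b) :=
    continuousOn_left_of_continuousAt_uncurry fun t ht =>
      (contDiffAt_uncurry_fderiv (m := 0) (hT t ht) (by simp)).continuousAt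
  simp only [lieDeriv]
  rw [(hasFDerivAt_intervalIntegral hT).fderiv,
    ContinuousLinearMap.intervalIntegral_apply hT'_cont.intervalIntegrable,
    ← ContinuousLinearMap.intervalIntegral_comp_comm _ hT_cont.intervalIntegrable,
    ← intervalIntegral.integral_add]
  · exact (hT'_cont.clm_apply continuousOn_const).intervalIntegrable
  · exact (continuousOn_const.clm_apply hT_cont).intervalIntegrable

lemma lieDeriv_fderiv {g : E → W} (hX : DifferentiableAt ℝ X x) (hg : ContDiffAt ℝ 2 g x) :
    lieDeriv (ContinuousLinearMap.compL ℝ E E W).flip X (fderiv ℝ g) x =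
      fderiv ℝ (fun y => fderiv ℝ g y (X y)) x := by
  have hsymm : IsSymmSndFDerivAt ℝ g x := hg.isSymmSndFDerivAt (by simp)
  have hg' : DifferentiableAt ℝ (fderiv ℝ g) x :=
    (hg.fderiv_right (m := 1) (by norm_num)).differentiableAt_one
  ext u
  simp [lieDeriv, fderiv_clm_apply hg' hX, hsymm.eq (X x) u, add_comm]

lemma fderiv_lieBracket (hX : ContDiffAt ℝ 2 X x) (hY : ContDiffAt ℝ 2 Y x) :
    fderiv ℝ (lieBracket ℝ X Y) x =
      fderiv ℝ (fderiv ℝ Y) x (X x) - fderiv ℝ (fderiv ℝ X) x (Y x) +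
        (fderiv ℝ Y x ∘L fderiv ℝ X x - fderiv ℝ X x ∘L fderiv ℝ Y x) := by
  have hX1 : DifferentiableAt ℝ X x := hX.differentiableAt (by simp)
  have hY1 : DifferentiableAt ℝ Y x := hY.differentiableAt (by simp)
  have hX2 : DifferentiableAt ℝ (fderiv ℝ X) x :=
    (hX.fderiv_right (m := 1) (by norm_num)).differentiableAt_one
  have hY2 : DifferentiableAt ℝ (fderiv ℝ Y) x :=
    (hY.fderiv_right (m := 1) (by norm_num)).differentiableAt_one
  have hbracket : lieBracket ℝ X Y = fun y => fderiv ℝ Y y (X y) - fderiv ℝ X y (Y y) := rfl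
  rw [hbracket, fderiv_fun_sub (hY2.clm_apply hX1) (hX2.clm_apply hY1),
    fderiv_clm_apply hY2 hX1, fderiv_clm_apply hX2 hY1]
  ext u
  have hYsymm := (hY.isSymmSndFDerivAt (by simp)).eq (X x) u
  have hXsymm := (hX.isSymmSndFDerivAt (by simp)).eq (Y x) u
  simp only [sub_apply, add_apply, ContinuousLinearMap.comp_apply, ContinuousLinearMap.flip_apply,
    hYsymm, hXsymm]
  abel

lemma lieDeriv_lieDeriv (hY : ContDiffAt ℝ 2 Y x) (hT : ContDiffAt ℝ 2 T x) :
    lieDeriv ρ X (lieDeriv ρ Y T) x =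
      fderiv ℝ (fun y => fderiv ℝ T y (Y y)) x (X x) +
        (ρ (fderiv ℝ (fderiv ℝ Y) x (X x)) (T x) + ρ (fderiv ℝ Y x) (fderiv ℝ T x (X x))) +
        (ρ (fderiv ℝ X x) (fderiv ℝ T x (Y x)) + ρ (fderiv ℝ X x) (ρ (fderiv ℝ Y x) (T x))) := by
  have hY1 : DifferentiableAt ℝ Y x := hY.differentiableAt (by simp)
  have hT1 : DifferentiableAt ℝ T x := hT.differentiableAt (by simp)
  have hY2 : DifferentiableAt ℝ (fderiv ℝ Y) x :=
    (hY.fderiv_right (m := 1) (by norm_num)).differentiableAt_one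
  have hT2 : DifferentiableAt ℝ (fderiv ℝ T) x :=
    (hT.fderiv_right (m := 1) (by norm_num)).differentiableAt_one
  have hYT : HasFDerivAt (lieDeriv ρ Y T) _ x := (hT2.clm_apply hY1).hasFDerivAt.add
    ((ρ.hasFDerivAt.comp x hY2.hasFDerivAt).clm_apply hT1.hasFDerivAt)
  rw [lieDeriv, hYT.fderiv]
  simp [lieDeriv, add_comm]

/-- The hypothesis on `ρ` is that it is a right action of the Lie algebra of endomorphisms. -/
lemma lieDeriv_lieBracket (hρ : ∀ A B, ρ (A ∘L B - B ∘L A) = ρ B ∘L ρ A - ρ A ∘L ρ B)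
    (hX : ContDiffAt ℝ 2 X x) (hY : ContDiffAt ℝ 2 Y x) (hT : ContDiffAt ℝ 2 T x) :
    lieDeriv ρ (lieBracket ℝ X Y) T x =
      lieDeriv ρ X (lieDeriv ρ Y T) x - lieDeriv ρ Y (lieDeriv ρ X T) x := by
  have hscalar := fderiv_apply_lieBracket (V := X) (W := Y) hT (by simp)
    (hY.differentiableAt (by simp)) (hX.differentiableAt (by simp))
  rw [lieDeriv, hscalar, fderiv_lieBracket hX hY, map_add, hρ, lieDeriv_lieDeriv hY hT,
    lieDeriv_lieDeriv hX hT]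
  simp only [map_sub, add_apply, sub_apply, ContinuousLinearMap.comp_apply]
  abel

lemma HasVariationAt.lieDeriv {X : ℝ → E → E} {X' : E → E} {T : ℝ → E → W} {T' : E → W} {s₀ : ℝ}
    (hX : HasVariationAt X X' s₀ x) (hT : HasVariationAt T T' s₀ x) :
    HasDerivAt (fun s => lieDeriv ρ (X s) (T s) x)
      (lieDeriv ρ X' (T s₀) x + lieDeriv ρ (X s₀) T' x) s₀ := by
  have hρX : HasDerivAt (fun s => ρ (fderiv ℝ (X s) x)) (ρ (fderiv ℝ X' x)) s₀ :=
    ρ.hasFDerivAt.comp_hasDerivAt s₀ hX.hasDerivAt_fderiv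
  refine ((hT.hasDerivAt_fderiv.clm_apply hX.hasDerivAt).add
    (hρX.clm_apply hT.hasDerivAt)).congr_deriv ?_
  simp only [_root_.lieDeriv]
  abel

end LieDerivative

section MatrixEntry

variable {ι V : Type*} [Finite ι] [NormedAddCommGroup V] [NormedSpace ℝ V]

/-- The `(i, j)` entry of a matrix, as a continuous linear map. -/
noncomputable def matrixEntryL {ι : Type*} (i j : ι) : Matrix ι ι ℝ →L[ℝ] ℝ where
  toLinearMap := Matrix.entryLinearMap ℝ ℝ i j
  cont := continuous_id.matrix_elem i j

lemma fderiv_matrix_apply {M : V → Matrix ι ι ℝ} {v : V} (hM : DifferentiableAt ℝ M v) (u : V)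
    (i j : ι) : fderiv ℝ (fun w => M w i j) v u = fderiv ℝ M v u i j := by
  classical
  have := Fintype.ofFinite ι
  rw [HasFDerivAt.fderiv (f := fun w => M w i j)
    ((matrixEntryL i j).hasFDerivAt.comp v hM.hasFDerivAt)]
  rfl

lemma deriv_matrix_apply {M : ℝ → Matrix ι ι ℝ} {t : ℝ} (hM : DifferentiableAt ℝ M t) (i j : ι) :
    deriv (fun s => M s i j) t = deriv M t i j := by
  classical
  have := Fintype.ofFinite ι
  exact ((matrixEntryL i j).hasFDerivAt.comp_hasDerivAt t hM.hasDerivAt).deriv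

end MatrixEntry

section MatrixCalculus

variable {ι V : Type*} [Fintype ι] [DecidableEq ι] [NormedAddCommGroup V] [NormedSpace ℝ V]
  {M : V → Matrix ι ι ℝ} {v : V}

lemma contDiffAt_matrix_iff {n : ℕ∞ω} :
    ContDiffAt ℝ n M v ↔ ∀ i j, ContDiffAt ℝ n (fun w => M w i j) v := by
  let e : Matrix ι ι ℝ ≃L[ℝ] (ι → ι → ℝ) := (Matrix.ofLinearEquiv ℝ).symm.toContinuousLinearEquiv
  rw [← e.comp_contDiffAt_iff]
  simp only [contDiffAt_pi]
  rfl

lemma intervalIntegral_matrix_apply {M : ℝ → Matrix ι ι ℝ} {a b : ℝ}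
    (hM : IntervalIntegrable M volume a b) (i j : ι) :
    ∫ s in a..b, M s i j = (∫ s in a..b, M s) i j :=
  (matrixEntryL i j).intervalIntegral_comp_comm hM

lemma contDiffAt_matrix_inv {n : ℕ∞ω} (hM : ContDiffAt ℝ n M v) (hv : IsUnit (M v)) :
    ContDiffAt ℝ n (fun w => (M w)⁻¹) v := by
  obtain ⟨u, hu⟩ := hv
  simp only [Matrix.nonsing_inv_eq_ringInverse]
  exact ContDiffAt.comp v (hu ▸ contDiffAt_ringInverse ℝ u) hM

lemma hasFDerivAt_matrix_inv {M₀ : Matrix ι ι ℝ} (hM₀ : IsUnit M₀) :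
    HasFDerivAt (fun M : Matrix ι ι ℝ => M⁻¹)
      (-ContinuousLinearMap.mulLeftRight ℝ (Matrix ι ι ℝ) M₀⁻¹ M₀⁻¹) M₀ := by
  obtain ⟨u, rfl⟩ := hM₀
  rw [← Matrix.coe_units_inv]
  simp only [Matrix.nonsing_inv_eq_ringInverse]
  exact hasFDerivAt_ringInverse u

end MatrixCalculus

section TensorActions

variable {ι : Type*} [Fintype ι]

/-- The contraction `(w, P) ↦ (w_j Pʲⁱ)_i` of a covector with a (2,0)-tensor. -/
noncomputable def contractL : ((ι → ℝ) →L[ℝ] ℝ) →L[ℝ] Matrix ι ι ℝ →L[ℝ] ι → ℝ :=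
  (LinearMap.mk₂ ℝ (fun (w : (ι → ℝ) →L[ℝ] ℝ) (P : Matrix ι ι ℝ) i => w (P.col i))
    (fun _ _ _ => rfl) (fun _ _ _ => rfl) (fun w _ _ => funext fun _ => map_add w _ _)
    (fun c w _ => funext fun _ => map_smul w c _)).toContinuousBilinearMap

lemma contractL_apply (w : (ι → ℝ) →L[ℝ] ℝ) (P : Matrix ι ι ℝ) (i : ι) :
    contractL w P i = w (P.col i) := rfl

variable [DecidableEq ι]

/-- The matrix of an endomorphism of `ι → ℝ` in the standard basis, as a continuous linear map. -/
noncomputable def toMatrixL : ((ι → ℝ) →L[ℝ] ι → ℝ) →L[ℝ] Matrix ι ι ℝ :=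
  (LinearMap.toMatrix'.toLinearMap ∘ₗ ContinuousLinearMap.coeLM ℝ).toContinuousLinearMap

lemma toMatrixL_apply (A : (ι → ℝ) →L[ℝ] ι → ℝ) (i j : ι) :
    toMatrixL A i j = A (Pi.single j 1) i := by
  simp [toMatrixL, LinearMap.toMatrix'_apply]

lemma toMatrixL_comp (A B : (ι → ℝ) →L[ℝ] ι → ℝ) :
    toMatrixL (A ∘L B) = toMatrixL A * toMatrixL B :=
  LinearMap.toMatrix'_comp A.toLinearMap B.toLinearMap

lemma toMatrixL_mulVec (A : (ι → ℝ) →L[ℝ] ι → ℝ) (v : ι → ℝ) : toMatrixL A *ᵥ v = A v :=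
  LinearMap.toMatrix'_mulVec A.toLinearMap v

/-- The infinitesimal action `m ↦ Aᵀ m + m A` of endomorphisms on (0,2)-tensors: the Lie
derivative it defines is `matLie`. -/
noncomputable def covariantAction :
    ((ι → ℝ) →L[ℝ] ι → ℝ) →L[ℝ] Matrix ι ι ℝ →L[ℝ] Matrix ι ι ℝ :=
  ContinuousLinearMap.mul ℝ (Matrix ι ι ℝ) ∘L
      (Matrix.transposeLinearEquiv ι ι ℝ ℝ).toLinearMap.toContinuousLinearMap ∘L toMatrixL +
    (ContinuousLinearMap.mul ℝ (Matrix ι ι ℝ)).flip ∘L toMatrixL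

lemma covariantAction_apply (A : (ι → ℝ) →L[ℝ] ι → ℝ) (m : Matrix ι ι ℝ) :
    covariantAction A m = (toMatrixL A)ᵀ * m + m * toMatrixL A := rfl

/-- The infinitesimal action `P ↦ -(A P + P Aᵀ)` of endomorphisms on (2,0)-tensors such as an
inverse metric. -/
noncomputable def contravariantAction :
    ((ι → ℝ) →L[ℝ] ι → ℝ) →L[ℝ] Matrix ι ι ℝ →L[ℝ] Matrix ι ι ℝ :=
  -(ContinuousLinearMap.mul ℝ (Matrix ι ι ℝ) ∘L toMatrixL +
    (ContinuousLinearMap.mul ℝ (Matrix ι ι ℝ)).flip ∘L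
      (Matrix.transposeLinearEquiv ι ι ℝ ℝ).toLinearMap.toContinuousLinearMap ∘L toMatrixL)

lemma contravariantAction_apply (A : (ι → ℝ) →L[ℝ] ι → ℝ) (P : Matrix ι ι ℝ) :
    contravariantAction A P = -(toMatrixL A * P + P * (toMatrixL A)ᵀ) := rfl

lemma covariantAction_commutator (A B : (ι → ℝ) →L[ℝ] ι → ℝ) :
    covariantAction (A ∘L B - B ∘L A) =
      covariantAction B ∘L covariantAction A - covariantAction A ∘L covariantAction B := by
  ext1 m
  simp only [sub_apply, ContinuousLinearMap.comp_apply, covariantAction_apply, map_sub,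
    toMatrixL_comp, Matrix.transpose_mul]
  noncomm_ring

lemma contractL_equivariant (A : (ι → ℝ) →L[ℝ] ι → ℝ) (w : (ι → ℝ) →L[ℝ] ℝ) (P : Matrix ι ι ℝ) :
    -A (contractL w P) = contractL (w ∘L A) P + contractL w (contravariantAction A P) := by
  have hcol (i : ι) : (contravariantAction A P).col i =
      -(A (P.col i) + ∑ k, toMatrixL A i k • P.col k) := by
    ext j
    simp [contravariantAction_apply, Matrix.mul_apply, ← toMatrixL_mulVec A, Matrix.mulVec,
      dotProduct, mul_comm]
  ext i
  simp [contractL_apply, hcol, ← toMatrixL_mulVec A (contractL w P), Matrix.mulVec, dotProduct]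

variable {X : (ι → ℝ) → ι → ℝ} {x : ι → ℝ}

lemma lieDeriv_matrix_inv {m : (ι → ℝ) → Matrix ι ι ℝ} (hm : DifferentiableAt ℝ m x)
    (hmx : IsUnit (m x)) :
    lieDeriv contravariantAction X (fun y => (m y)⁻¹) x =
      -((m x)⁻¹ * lieDeriv covariantAction X m x * (m x)⁻¹) := by
  have hinv : HasFDerivAt (fun y => (m y)⁻¹) _ x :=
    (hasFDerivAt_matrix_inv hmx).comp x hm.hasFDerivAt
  have hdet : IsUnit (m x).det := (Matrix.isUnit_iff_isUnit_det _).1 hmx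
  simp only [lieDeriv, hinv.fderiv, contravariantAction_apply, covariantAction_apply,
    ContinuousLinearMap.comp_apply, neg_apply, ContinuousLinearMap.mulLeftRight_apply, mul_add,
    add_mul, neg_add_rev]
  rw [Matrix.mul_assoc _ (m x * _), Matrix.mul_assoc (m x), ← Matrix.mul_assoc _ (m x),
    Matrix.nonsing_inv_mul _ hdet, ← Matrix.mul_assoc _ (_ᵀ), Matrix.mul_assoc _ (m x) (m x)⁻¹,
    Matrix.mul_nonsing_inv _ hdet]
  noncomm_ring

end TensorActions

section InvertibleFamily

variable {ι V : Type*} [Fintype ι] [DecidableEq ι] [NormedAddCommGroup V] [NormedSpace ℝ V]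
  {n : ℕ} {k K : ℝ → V → Matrix ι ι ℝ} {a b : ℝ} {v : V}

/-- The time-dependent matrix field `k` is jointly of class `C^n` and invertible at every point of
the time segment over `v` that joins `a` and `b`. -/
def IsInvertibleFamilyAt (n : ℕ) (k : ℝ → V → Matrix ι ι ℝ) (a b : ℝ) (v : V) : Prop :=
  ∀ s ∈ uIcc a b, ContDiffAt ℝ n (uncurry k) (s, v) ∧ IsUnit (k s v)

/-- The time integral `∫ k⁻¹` of the inverse field, through which `ζ_f` depends on the metric. -/
noncomputable def invIntegral (k : ℝ → V → Matrix ι ι ℝ) (a b : ℝ) (v : V) : Matrix ι ι ℝ :=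
  ∫ s in a..b, (k s v)⁻¹

namespace IsInvertibleFamilyAt

lemma of_le {m : ℕ} (hk : IsInvertibleFamilyAt n k a b v) (hmn : m ≤ n) :
    IsInvertibleFamilyAt m k a b v := fun s hs =>
  ⟨(hk s hs).1.of_le (mod_cast hmn), (hk s hs).2⟩

lemma eventually (hk : IsInvertibleFamilyAt n k a b v) :
    ∀ᶠ w in 𝓝 v, IsInvertibleFamilyAt n k a b w := by
  refine eventually_forall_mem_uIcc
    (p := fun q => ContDiffAt ℝ n (uncurry k) q ∧ IsUnit (uncurry k q)) fun s hs => ?_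
  exact ((hk s hs).1.eventually (by simp)).and
    ((hk s hs).1.continuousAt.eventually_mem (Units.isOpen.mem_nhds (hk s hs).2))

lemma comp {U : Type*} [NormedAddCommGroup U] [NormedSpace ℝ U] {g : U → V} {u : U}
    (hk : IsInvertibleFamilyAt n k a b (g u)) (hg : ContDiffAt ℝ n g u) :
    IsInvertibleFamilyAt n (fun s w => k s (g w)) a b u := fun s hs =>
  ⟨ContDiffAt.comp (g := uncurry k) (f := fun q : ℝ × U => (q.1, g q.2)) (s, u) (hk s hs).1
    (contDiffAt_fst.prodMk (hg.comp (s, u) contDiffAt_snd)), (hk s hs).2⟩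

lemma add_smul (hk : IsInvertibleFamilyAt n k a b v)
    (hK : ∀ s ∈ uIcc a b, ContDiffAt ℝ n (uncurry K) (s, v)) :
    IsInvertibleFamilyAt n (fun s (q : ℝ × V) => k s q.2 + q.1 • K s q.2) a b (0, v) := by
  intro s hs
  have hproj : ContDiffAt ℝ n (fun p : ℝ × ℝ × V => (p.1, p.2.2)) (s, 0, v) := by fun_prop
  refine ⟨?_, by simpa using (hk s hs).2⟩
  exact (ContDiffAt.comp (g := uncurry k) (s, 0, v) (hk s hs).1 hproj).add
    (contDiffAt_snd.fst.smul (ContDiffAt.comp (g := uncurry K) (s, 0, v) (hK s hs) hproj))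

lemma contDiffAt_inv (hk : IsInvertibleFamilyAt n k a b v) :
    ∀ s ∈ uIcc a b, ContDiffAt ℝ n (uncurry fun s w => (k s w)⁻¹) (s, v) := fun s hs =>
  contDiffAt_matrix_inv (M := uncurry k) (hk s hs).1 (hk s hs).2

lemma intervalIntegrable_inv (hk : IsInvertibleFamilyAt n k a b v) :
    IntervalIntegrable (fun s => (k s v)⁻¹) volume a b :=
  (continuousOn_left_of_continuousAt_uncurry fun s hs =>
    (hk.contDiffAt_inv s hs).continuousAt).intervalIntegrable

lemma eventually_add_smul (hk : IsInvertibleFamilyAt n k a b v)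
    (hK : ∀ s ∈ uIcc a b, ContDiffAt ℝ n (uncurry K) (s, v)) :
    ∀ᶠ σ : ℝ in 𝓝 0, IsInvertibleFamilyAt n (fun s w => k s w + σ • K s w) a b v :=
  (hk.add_smul hK).eventually.curry_nhds.mono fun σ hσ =>
    hσ.self_of_nhds.comp (g := fun w => (σ, w)) (by fun_prop)

lemma differentiableAt_time (hk : IsInvertibleFamilyAt 1 k a b v) :
    DifferentiableAt ℝ (fun s => k s v) b :=
  differentiableAt_left_of_uncurry (hk b right_mem_uIcc).1.differentiableAt_one

lemma contDiffAt_space (hk : IsInvertibleFamilyAt n k a b v) : ContDiffAt ℝ n (k b) v :=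
  (hk b right_mem_uIcc).1.comp (g := uncurry k) (f := fun w => (b, w)) v (by fun_prop)

end IsInvertibleFamilyAt

universe u

lemma contDiffAt_invIntegral {ι V : Type u} [Fintype ι] [DecidableEq ι] [NormedAddCommGroup V]
    [NormedSpace ℝ V] {k : ℝ → V → Matrix ι ι ℝ} {v : V} (hk : IsInvertibleFamilyAt n k a b v) :
    ContDiffAt ℝ n (invIntegral k a b) v :=
  contDiffAt_intervalIntegral hk.contDiffAt_inv

lemma hasDerivAt_invIntegral_add_smul (hk : IsInvertibleFamilyAt 1 k a b v)
    (hK : ∀ s ∈ uIcc a b, ContDiffAt ℝ 1 (uncurry K) (s, v)) :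
    HasDerivAt (fun σ : ℝ => invIntegral (fun s w => k s w + σ • K s w) a b v)
      (∫ s in a..b, -((k s v)⁻¹ * K s v * (k s v)⁻¹)) 0 := by
  have hfamily : IsInvertibleFamilyAt 1 (fun s (σ : ℝ) => k s v + σ • K s v) a b 0 :=
    (hk.add_smul hK).comp (g := fun σ : ℝ => (σ, v)) (by fun_prop)
  have hfderiv_cont : ContinuousOn (fun s => fderiv ℝ (fun σ : ℝ => (k s v + σ • K s v)⁻¹) 0)
      (uIcc a b) :=
    continuousOn_left_of_continuousAt_uncurry fun s hs => (contDiffAt_uncurry_fderiv (m := 0)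
      (hfamily.contDiffAt_inv s hs) (by simp)).continuousAt
  refine (hasFDerivAt_intervalIntegral hfamily.contDiffAt_inv).hasDerivAt.congr_deriv ?_
  rw [ContinuousLinearMap.intervalIntegral_apply hfderiv_cont.intervalIntegrable]
  refine intervalIntegral.integral_congr fun s hs => ?_
  have hline : HasDerivAt (fun σ : ℝ => k s v + σ • K s v) (K s v) 0 := by
    simpa using ((hasDerivAt_id (0 : ℝ)).smul_const (K s v)).const_add (k s v)
  have hinv : HasDerivAt (fun σ : ℝ => (k s v + σ • K s v)⁻¹) _ 0 :=
    (hasFDerivAt_matrix_inv (hfamily s hs).2).comp_hasDerivAt 0 hline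
  simpa using hinv.deriv

end InvertibleFamily

section CoordinateFormulas

variable {dd : ℕ} {h : ℝ → (Fin dd → ℝ) → Matrix (Fin dd) (Fin dd) ℝ} {f : (Fin dd → ℝ) → ℝ}
  {χ : (Fin dd → ℝ) → Fin dd → ℝ} {t₀ t : ℝ} {x : Fin dd → ℝ}

lemma sum_mul_pd (F : (Fin dd → ℝ) → ℝ) (v x : Fin dd → ℝ) :
    ∑ k, v k * pd k F x = fderiv ℝ F x v := by
  conv_rhs => rw [pi_eq_sum_univ' v]
  simp [pd]

lemma toMatrixL_fderiv {X : (Fin dd → ℝ) → Fin dd → ℝ} (hX : DifferentiableAt ℝ X x)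
    (k i : Fin dd) : toMatrixL (fderiv ℝ X x) k i = pd i (fun y => X y k) x := by
  rw [toMatrixL_apply, pd, ((hasFDerivAt_pi'.1 hX.hasFDerivAt) k).fderiv]
  rfl

lemma matLie_eq_lieDeriv {X : (Fin dd → ℝ) → Fin dd → ℝ}
    {m : (Fin dd → ℝ) → Matrix (Fin dd) (Fin dd) ℝ} (hX : DifferentiableAt ℝ X x)
    (hm : DifferentiableAt ℝ m x) : matLie X m x = lieDeriv covariantAction X m x := by
  ext i j
  simp only [matLie, lieDeriv, Matrix.of_apply, Matrix.add_apply, sum_mul_pd,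
    fderiv_matrix_apply hm, covariantAction_apply, Matrix.mul_apply, Matrix.transpose_apply,
    toMatrixL_fderiv hX, Finset.sum_add_distrib, mul_comm]

lemma zeta_eq_contractL {n : ℕ} (hh : IsInvertibleFamilyAt n h t₀ t x) :
    zeta f h t₀ t x = contractL (fderiv ℝ f x) (invIntegral h t₀ t x) := by
  ext i
  rw [contractL_apply, ← sum_mul_pd]
  simp only [zeta, intervalIntegral_matrix_apply hh.intervalIntegrable_inv, invIntegral,
    Matrix.col_apply, mul_comm]

lemma contDiffAt_zeta {n : ℕ} (hh : IsInvertibleFamilyAt n h t₀ t x)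
    (hf : ContDiffAt ℝ (n + 1 : ℕ) f x) : ContDiffAt ℝ n (zeta f h t₀ t) x := by
  have hzeta : zeta f h t₀ t =ᶠ[𝓝 x]
      fun y => contractL (fderiv ℝ f y) (invIntegral h t₀ t y) :=
    hh.eventually.mono fun y => zeta_eq_contractL
  exact (contDiffAt_bilinear (B := contractL) (hf.fderiv_right (by simp))
    (contDiffAt_invIntegral hh)).congr_of_eventuallyEq hzeta

lemma deltaF_eq_smul_add_lieDeriv (hh : IsInvertibleFamilyAt 1 h t₀ t x)
    (hf : ContDiffAt ℝ 2 f x) :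
    deltaF f h t₀ t x =
      f x • deriv (fun s => h s x) t + lieDeriv covariantAction (zeta f h t₀ t) (h t) x := by
  have hζ : DifferentiableAt ℝ (zeta f h t₀ t) x :=
    (contDiffAt_zeta hh hf).differentiableAt_one
  ext i j
  simp [deltaF, matLie_eq_lieDeriv hζ hh.contDiffAt_space.differentiableAt_one,
    deriv_matrix_apply hh.differentiableAt_time]

lemma contDiffAt_uncurry_deltaChi {n : ℕ} {s : ℝ}
    (hh : ContDiffAt ℝ (n + 1 : ℕ) (uncurry h) (s, x)) (hχ : ContDiffAt ℝ (n + 1 : ℕ) χ x) :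
    ContDiffAt ℝ n (uncurry (deltaChi χ h)) (s, x) := by
  have hχ_near : ∀ᶠ p : ℝ × (Fin dd → ℝ) in 𝓝 (s, x), DifferentiableAt ℝ χ p.2 :=
    (continuous_snd.tendsto (s, x)).eventually
      ((hχ.eventually (by simp)).mono fun y hy => hy.differentiableAt (by simp))
  refine (contDiffAt_uncurry_lieDeriv (ρ := covariantAction) hχ hh
    (by simp)).congr_of_eventuallyEq ?_
  filter_upwards [hχ_near, hh.eventually (by simp)] with p hχp hp
  exact matLie_eq_lieDeriv hχp (differentiableAt_right_of_uncurry (hp.differentiableAt (by simp)))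

lemma hasDerivAt_invIntegral_deltaChi (hh : IsInvertibleFamilyAt 2 h t₀ t x)
    (hχ : ContDiffAt ℝ 2 χ x) :
    HasDerivAt (fun σ : ℝ => invIntegral (fun s y => h s y + σ • deltaChi χ h s y) t₀ t x)
      (lieDeriv contravariantAction χ (invIntegral h t₀ t) x) 0 := by
  have hh1 : IsInvertibleFamilyAt 1 h t₀ t x := hh.of_le one_le_two
  refine (hasDerivAt_invIntegral_add_smul hh1 fun s hs =>
    contDiffAt_uncurry_deltaChi (n := 1) (hh s hs).1 hχ).congr_deriv ?_
  rw [show invIntegral h t₀ t = fun y => ∫ s in t₀..t, (h s y)⁻¹ from rfl,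
    lieDeriv_intervalIntegral hh1.contDiffAt_inv]
  refine intervalIntegral.integral_congr fun s hs => ?_
  have hspace : DifferentiableAt ℝ (h s) x :=
    differentiableAt_right_of_uncurry (hh1 s hs).1.differentiableAt_one
  simp only [deltaChi, matLie_eq_lieDeriv (hχ.differentiableAt (by simp)) hspace,
    lieDeriv_matrix_inv hspace (hh s hs).2]

lemma contractL_lieDeriv_invIntegral (hh : IsInvertibleFamilyAt 1 h t₀ t x)
    (hf : ContDiffAt ℝ 2 f x) (hχ : DifferentiableAt ℝ χ x) :
    contractL (fderiv ℝ f x) (lieDeriv contravariantAction χ (invIntegral h t₀ t) x) =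
      lieBracket ℝ χ (zeta f h t₀ t) x - zeta (fun y => ∑ k, χ y k * pd k f y) h t₀ t x := by
  have hf' : DifferentiableAt ℝ (fderiv ℝ f) x :=
    (hf.fderiv_right (m := 1) (by norm_num)).differentiableAt_one
  have hζ : zeta f h t₀ t =ᶠ[𝓝 x]
      fun y => contractL (fderiv ℝ f y) (invIntegral h t₀ t y) :=
    hh.eventually.mono fun y => zeta_eq_contractL
  rw [← lieDeriv_neg_id, lieDeriv_congr (.refl _ χ) hζ, lieDeriv_bilinear
      (ρ₁ := (ContinuousLinearMap.compL ℝ _ _ ℝ).flip) (ρ₂ := contravariantAction)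
      contractL_equivariant hf' (contDiffAt_invIntegral hh).differentiableAt_one,
    lieDeriv_fderiv hχ hf, zeta_eq_contractL hh]
  simp only [sum_mul_pd, add_sub_cancel_left]

lemma hasVariationAt_zeta (hh : IsInvertibleFamilyAt 3 h t₀ t x) (hf : ContDiffAt ℝ 3 f x)
    (hχ : ContDiffAt ℝ 3 χ x) :
    HasVariationAt (fun σ : ℝ => zeta f (fun s y => h s y + σ • deltaChi χ h s y) t₀ t)
      (fun y => lieBracket ℝ χ (zeta f h t₀ t) y -
        zeta (fun y => ∑ k, χ y k * pd k f y) h t₀ t y) 0 x := by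
  have hfamily : IsInvertibleFamilyAt 2
      (fun s (q : ℝ × (Fin dd → ℝ)) => h s q.2 + q.1 • deltaChi χ h s q.2) t₀ t (0, x) :=
    (hh.of_le (by simp)).add_smul fun s hs => contDiffAt_uncurry_deltaChi (n := 2) (hh s hs).1 hχ
  have hdf : ContDiffAt ℝ 2 (fderiv ℝ f) x := hf.fderiv_right (by norm_num)
  have hsmooth : ContDiffAt ℝ 2 (uncurry fun (σ : ℝ) y => contractL (fderiv ℝ f y)
      (invIntegral (fun s y => h s y + σ • deltaChi χ h s y) t₀ t y)) (0, x) :=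
    contDiffAt_bilinear (B := contractL) (hdf.comp (0, x) contDiffAt_snd)
      (contDiffAt_invIntegral hfamily)
  refine ((hasVariationAt_of_contDiffAt hsmooth).congr_family ?_).congr_variation ?_
  · refine hfamily.eventually.curry_nhds.mono fun σ hσ => hσ.mono fun y hy => ?_
    exact zeta_eq_contractL (hy.comp (g := fun y => (σ, y)) (by fun_prop))
  · filter_upwards [hh.eventually, hf.eventually (by simp), hχ.eventually (by simp)]
      with y hhy hfy hχy
    rw [← contractL_lieDeriv_invIntegral (hhy.of_le (by simp)) (hfy.of_le (by norm_num))
      (hχy.differentiableAt (by simp))]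
    exact ((contractL (fderiv ℝ f y)).hasFDerivAt.comp_hasDerivAt 0
      (hasDerivAt_invIntegral_deltaChi (hhy.of_le (by simp)) (hχy.of_le (by norm_num)))).deriv

lemma hasDerivAt_deltaChi_time (hh : ContDiffAt ℝ 2 (uncurry h) (t, x))
    (hχ : DifferentiableAt ℝ χ x) :
    HasDerivAt (fun s => deltaChi χ h s x)
      (lieDeriv covariantAction χ (fun y => deriv (fun s => h s y) t) x) t := by
  have hspace : ∀ᶠ s in 𝓝 t, DifferentiableAt ℝ (h s) x :=
    ((Continuous.prodMk_left x).tendsto t).eventually (hh.eventually (by simp)) |>.mono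
      fun s hs => differentiableAt_right_of_uncurry (hs.differentiableAt (by simp))
  have hvar := (HasVariationAt.const χ t x).lieDeriv (ρ := covariantAction)
    (hasVariationAt_of_contDiffAt hh)
  rw [lieDeriv_zero_left, zero_add] at hvar
  exact hvar.congr_of_eventuallyEq (hspace.mono fun s hs => matLie_eq_lieDeriv hχ hs)

lemma hasDerivAt_deltaChi_add_smul {K : ℝ → (Fin dd → ℝ) → Matrix (Fin dd) (Fin dd) ℝ}
    (hχ : DifferentiableAt ℝ χ x) (hh : DifferentiableAt ℝ (h t) x)
    (hK : DifferentiableAt ℝ (K t) x) (σ₀ : ℝ) :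
    HasDerivAt (fun σ : ℝ => deltaChi χ (fun s y => h s y + σ • K s y) t x)
      (lieDeriv covariantAction χ (K t) x) σ₀ := by
  have hvar := (HasVariationAt.const χ σ₀ x).lieDeriv (ρ := covariantAction)
    (HasVariationAt.add_smul hh hK)
  rw [lieDeriv_zero_left, zero_add] at hvar
  exact hvar.congr_of_eventuallyEq (.of_forall fun σ =>
    matLie_eq_lieDeriv hχ (hh.add (hK.const_smul σ)))

lemma hasDerivAt_deltaF_add_smul {K : ℝ → (Fin dd → ℝ) → Matrix (Fin dd) (Fin dd) ℝ}
    {ζ' : (Fin dd → ℝ) → Fin dd → ℝ} (hh : IsInvertibleFamilyAt 1 h t₀ t x)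
    (hf : ContDiffAt ℝ 2 f x) (hK : ∀ s ∈ uIcc t₀ t, ContDiffAt ℝ 1 (uncurry K) (s, x))
    (hζ : HasVariationAt (fun σ : ℝ => zeta f (fun s y => h s y + σ • K s y) t₀ t) ζ' 0 x) :
    HasDerivAt (fun σ : ℝ => deltaF f (fun s y => h s y + σ • K s y) t₀ t x)
      (f x • deriv (fun s => K s x) t +
        (lieDeriv covariantAction ζ' (h t) x +
          lieDeriv covariantAction (zeta f h t₀ t) (K t) x)) 0 := by
  have hKt : DifferentiableAt ℝ (uncurry K) (t, x) := (hK t right_mem_uIcc).differentiableAt_one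
  have hdot (σ : ℝ) : deriv (fun s => h s x + σ • K s x) t =
      deriv (fun s => h s x) t + σ • deriv (fun s => K s x) t :=
    (hh.differentiableAt_time.hasDerivAt.add
      ((differentiableAt_left_of_uncurry hKt).hasDerivAt.const_smul σ)).deriv
  have hdeltaF := (hh.eventually_add_smul hK).mono fun σ hσ => deltaF_eq_smul_add_lieDeriv hσ hf
  have hboost : HasDerivAt (fun σ : ℝ => f x • (deriv (fun s => h s x) t +
      σ • deriv (fun s => K s x) t)) (f x • deriv (fun s => K s x) t) 0 := by
    refine HasDerivAt.fun_const_smul (f x) ?_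
    simpa using ((hasDerivAt_id (0 : ℝ)).smul_const (deriv (fun s => K s x) t)).const_add
      (deriv (fun s => h s x) t)
  have hlie := hζ.lieDeriv (ρ := covariantAction)
    (HasVariationAt.add_smul hh.contDiffAt_space.differentiableAt_one
      (differentiableAt_right_of_uncurry hKt))
  simp only [zero_smul, add_zero] at hlie
  simp only [hdot] at hdeltaF
  exact (hboost.add hlie).congr_of_eventuallyEq hdeltaF

lemma deltaF_eventuallyEq (hh : IsInvertibleFamilyAt 1 h t₀ t x) (hf : ContDiffAt ℝ 2 f x) :
    deltaF f h t₀ t =ᶠ[𝓝 x] fun y =>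
      f y • deriv (fun s => h s y) t + lieDeriv covariantAction (zeta f h t₀ t) (h t) y := by
  filter_upwards [hh.eventually, hf.eventually (by simp)] with y hhy hfy
  exact deltaF_eq_smul_add_lieDeriv hhy hfy

lemma differentiableAt_lieDeriv_zeta (hh : IsInvertibleFamilyAt 2 h t₀ t x)
    (hf : ContDiffAt ℝ 3 f x) :
    DifferentiableAt ℝ (lieDeriv covariantAction (zeta f h t₀ t) (h t)) x :=
  (contDiffAt_lieDeriv (m := 1) (contDiffAt_zeta hh hf) hh.contDiffAt_space
    (by norm_num)).differentiableAt_one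

lemma differentiableAt_deltaF (hh : IsInvertibleFamilyAt 2 h t₀ t x) (hf : ContDiffAt ℝ 3 f x) :
    DifferentiableAt ℝ (deltaF f h t₀ t) x := by
  have hdot : DifferentiableAt ℝ (fun y => deriv (fun s => h s y) t) x :=
    (hasFDerivAt_deriv_left (hh t right_mem_uIcc).1).differentiableAt
  exact (((hf.differentiableAt (by simp)).fun_smul hdot).add
    (differentiableAt_lieDeriv_zeta hh hf)).congr_of_eventuallyEq
      (deltaF_eventuallyEq (hh.of_le one_le_two) (hf.of_le (by norm_num)))

lemma lieDeriv_deltaF (hh : IsInvertibleFamilyAt 2 h t₀ t x) (hf : ContDiffAt ℝ 3 f x)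
    (X : (Fin dd → ℝ) → Fin dd → ℝ) :
    lieDeriv covariantAction X (deltaF f h t₀ t) x =
      fderiv ℝ f x (X x) • deriv (fun s => h s x) t +
        f x • lieDeriv covariantAction X (fun y => deriv (fun s => h s y) t) x +
          lieDeriv covariantAction X (lieDeriv covariantAction (zeta f h t₀ t) (h t)) x := by
  have hf1 : DifferentiableAt ℝ f x := hf.differentiableAt (by simp)
  have hdot : DifferentiableAt ℝ (fun y => deriv (fun s => h s y) t) x :=
    (hasFDerivAt_deriv_left (hh t right_mem_uIcc).1).differentiableAt
  rw [lieDeriv_congr (.refl _ X)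
      (deltaF_eventuallyEq (hh.of_le one_le_two) (hf.of_le (by norm_num))),
    lieDeriv_add_right (hf1.fun_smul hdot) (differentiableAt_lieDeriv_zeta hh hf),
    lieDeriv_smul hf1 hdot]

lemma hasDerivAt_deltaF_add_smul_deltaChi (hh : IsInvertibleFamilyAt 3 h t₀ t x)
    (hf : ContDiffAt ℝ 3 f x) (hχ : ContDiffAt ℝ 3 χ x) :
    HasDerivAt (fun σ : ℝ => deltaF f (fun s y => h s y + σ • deltaChi χ h s y) t₀ t x)
      (lieDeriv covariantAction χ (deltaF f h t₀ t) x -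
        deltaF (fun y => ∑ k, χ y k * pd k f y) h t₀ t x) 0 := by
  have hh2 : IsInvertibleFamilyAt 2 h t₀ t x := hh.of_le (by simp)
  have hh1 : IsInvertibleFamilyAt 1 h t₀ t x := hh.of_le (by simp)
  have hχ2 : ContDiffAt ℝ 2 χ x := hχ.of_le (by norm_num)
  have hχ1 : DifferentiableAt ℝ χ x := hχ.differentiableAt (by simp)
  have hχf : ContDiffAt ℝ 2 (fun y => ∑ k, χ y k * pd k f y) x := by
    simp only [sum_mul_pd]
    exact (hf.fderiv_right (by norm_num)).clm_apply hχ2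
  have hζ : ContDiffAt ℝ 2 (zeta f h t₀ t) x := contDiffAt_zeta hh2 hf
  have hζχ : DifferentiableAt ℝ (zeta (fun y => ∑ k, χ y k * pd k f y) h t₀ t) x :=
    (contDiffAt_zeta hh1 hχf).differentiableAt_one
  have hbracket : DifferentiableAt ℝ (lieBracket ℝ χ (zeta f h t₀ t)) x :=
    (ContDiffAt.lieBracket_vectorField (m := 1) hχ2 hζ (by norm_num)).differentiableAt_one
  have hδχ : deltaChi χ h t =ᶠ[𝓝 x] lieDeriv covariantAction χ (h t) := by
    filter_upwards [hχ2.eventually (by simp), hh2.eventually] with y hχy hhy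
    exact matLie_eq_lieDeriv (hχy.differentiableAt (by simp))
      (hhy.contDiffAt_space.differentiableAt (by simp))
  have hvar := hasDerivAt_deltaF_add_smul hh1 (hf.of_le (by norm_num))
    (fun s hs => contDiffAt_uncurry_deltaChi (n := 1) (hh2 s hs).1 hχ2)
    (hasVariationAt_zeta hh hf hχ)
  refine hvar.congr_deriv ?_
  rw [lieDeriv_sub_left hbracket hζχ, lieDeriv_lieBracket covariantAction_commutator hχ2 hζ
    hh2.contDiffAt_space, lieDeriv_congr (.refl _ _) hδχ, lieDeriv_deltaF hh2 hf,
    (hasDerivAt_deltaChi_time (hh2 t right_mem_uIcc).1 hχ1).deriv,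
    deltaF_eq_smul_add_lieDeriv hh1 hχf, sum_mul_pd]
  abel

end CoordinateFormulas

theorem stmt9_general {dd : ℕ} {h : ℝ → (Fin dd → ℝ) → Matrix (Fin dd) (Fin dd) ℝ}
    {f : (Fin dd → ℝ) → ℝ} {χ : (Fin dd → ℝ) → Fin dd → ℝ} {t₀ t : ℝ} {x : Fin dd → ℝ}
    (hh : ∀ s ∈ uIcc t₀ t, ∀ i j,
      ContDiffAt ℝ 3 (fun p : ℝ × (Fin dd → ℝ) => h p.1 p.2 i j) (s, x))
    (hinv : ∀ s ∈ uIcc t₀ t, IsUnit (h s x).det)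
    (hf : ContDiffAt ℝ 3 f x) (hχ : ∀ k, ContDiffAt ℝ 3 (fun y => χ y k) x) (i j : Fin dd) :
    deriv (fun s : ℝ => deltaF f (fun t' x' => h t' x' + s • deltaChi χ h t' x') t₀ t x i j) 0 -
        deriv (fun s : ℝ =>
          deltaChi χ (fun t' x' => h t' x' + s • deltaF f h t₀ t' x') t x i j) 0 =
      -deltaF (fun y => ∑ k, χ y k * pd k f y) h t₀ t x i j := by
  have hfamily : IsInvertibleFamilyAt 3 h t₀ t x := fun s hs =>
    ⟨contDiffAt_matrix_iff.2 (hh s hs), (Matrix.isUnit_iff_isUnit_det _).2 (hinv s hs)⟩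
  have hfamily2 : IsInvertibleFamilyAt 2 h t₀ t x := hfamily.of_le (by simp)
  have hχ' : ContDiffAt ℝ 3 χ x := contDiffAt_pi.2 hχ
  have hfχ := hasDerivAt_deltaF_add_smul_deltaChi hfamily hf hχ'
  have hχf := hasDerivAt_deltaChi_add_smul (hχ'.differentiableAt (by simp))
    (hfamily2.contDiffAt_space.differentiableAt (by simp)) (differentiableAt_deltaF hfamily2 hf) 0
  rw [deriv_matrix_apply hfχ.differentiableAt, hfχ.deriv, deriv_matrix_apply hχf.differentiableAt,
    hχf.deriv, Matrix.sub_apply]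
  ring

/-- For a smooth one-parameter family of (invertible) metrics `h(t)` and
the field-dependent variation `δ_f h = f ḣ + L_{ζ_f[h]} h`, where
`ζ_f[h]ⁱ = ∂_j f ∫_{t₀}^t hʲⁱ`, and the variation `δ_χ h = L_χ h` along a
time-independent spatial vector field `χ`, the commutator of variations (computed by
expanding the field dependence of `ζ_f[h]` to first order) satisfies
`[δ_f, δ_χ] h = − δ_{χ(f)} h = −(χ(f) ḣ + L_{ζ_{χ(f)}[h]} h)`. -/
theorem stmt9 {dd : ℕ} (h : ℝ → (Fin dd → ℝ) → Matrix (Fin dd) (Fin dd) ℝ)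
    (f : (Fin dd → ℝ) → ℝ) (χ : (Fin dd → ℝ) → Fin dd → ℝ) (t₀ : ℝ)
    (hh : ∀ i j, ContDiff ℝ (⊤ : ℕ∞) (fun p : ℝ × (Fin dd → ℝ) => h p.1 p.2 i j))
    (hsymm : ∀ t x i j, h t x i j = h t x j i)
    (hinv : ∀ t x, IsUnit (h t x).det)
    (hf : ContDiff ℝ (⊤ : ℕ∞) f) (hχ : ∀ k, ContDiff ℝ (⊤ : ℕ∞) (fun x => χ x k)) :
    ∀ (t : ℝ) (x : Fin dd → ℝ) (i j : Fin dd),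
      deriv (fun s : ℝ =>
          deltaF f (fun t' x' => h t' x' + s • deltaChi χ h t' x') t₀ t x i j) 0
        - deriv (fun s : ℝ =>
          deltaChi χ (fun t' x' => h t' x' + s • deltaF f h t₀ t' x') t x i j) 0
      = - deltaF (fun y => ∑ k, χ y k * pd k f y) h t₀ t x i j := by
  exact fun t x => stmt9_general (fun s _ i j => (hh i j).contDiffAt.of_le ENat.LEInfty.out)
    (fun s _ => hinv s x) (hf.contDiffAt.of_le ENat.LEInfty.out)
    fun k => (hχ k).contDiffAt.of_le ENat.LEInfty.out
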